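/- arXiv:1112.3695 — 7 statements merged into one kernel-verified Lean document; each statement's English description precedes it below -/
import Mathlib

section
/- Let n ≥ 1, let f ∈ ℂ[x,y] be a nonzero homogeneous polynomial of degree n, let u = (u₁,u₂) ∈ ℂ² be nonzero, and let 1 ≤ c ≤ n. Then the c-fold directional derivative satisfies D_u^c f = 0 if and only if the linear form (u₂·x − u₁·y)^{n−c+1} divides f. -/
open MvPolynomial

/-- The directional derivative as a derivation. -/
noncomputable def dirD (u : Fin 2 → ℂ) :
    Derivation ℂ (MvPolynomial (Fin 2) ℂ) (MvPolynomial (Fin 2) ℂ) :=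
  (C (u 0) : MvPolynomial (Fin 2) ℂ) • pderiv (0 : Fin 2) +
    (C (u 1) : MvPolynomial (Fin 2) ℂ) • pderiv (1 : Fin 2)

lemma dirD_apply (u : Fin 2 → ℂ) (g : MvPolynomial (Fin 2) ℂ) :
    dirD u g = C (u 0) * pderiv (0 : Fin 2) g + C (u 1) * pderiv (1 : Fin 2) g := by
  simp [dirD]

lemma dirD_comm (u : Fin 2 → ℂ) (i : Fin 2) (g : MvPolynomial (Fin 2) ℂ) :
    dirD u (pderiv i g) = pderiv i (dirD u g) := by
  have h : ⁅dirD u, (pderiv i : Derivation ℂ (MvPolynomial (Fin 2) ℂ) (MvPolynomial (Fin 2) ℂ))⁆ = 0 := by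
    apply MvPolynomial.derivation_ext
    intro j
    rw [Derivation.commutator_apply]
    fin_cases i <;> fin_cases j <;> simp [dirD_apply, pderiv_X]
  have h2 := congrArg (fun d => d g) h
  simp only [Derivation.commutator_apply, Derivation.zero_apply] at h2
  exact sub_eq_zero.mp h2

lemma dirD_iter_comm (u : Fin 2 → ℂ) (i : Fin 2) (c : ℕ) (g : MvPolynomial (Fin 2) ℂ) :
    (dirD u)^[c] (pderiv i g) = pderiv i ((dirD u)^[c] g) := by
  induction c generalizing g with
  | zero => rfl
  | succ c ih => rw [Function.iterate_succ_apply, Function.iterate_succ_apply, dirD_comm, ih]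

lemma dirD_hom (u : Fin 2 → ℂ) {n : ℕ} {g : MvPolynomial (Fin 2) ℂ} (h : g.IsHomogeneous n) :
    (dirD u g).IsHomogeneous (n - 1) := by
  rw [dirD_apply]
  exact (h.pderiv.C_mul _).add (h.pderiv.C_mul _)

lemma dirD_zero_iter (u : Fin 2 → ℂ) (c : ℕ) : (dirD u)^[c] 0 = 0 :=
  Function.iterate_fixed (map_zero _) c

lemma dirD_iter_hom (u : Fin 2 → ℂ) {m c : ℕ} (hmc : m < c) {g : MvPolynomial (Fin 2) ℂ}
    (h : g.IsHomogeneous m) : (dirD u)^[c] g = 0 := by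
  induction m generalizing c g with
  | zero =>
    obtain ⟨c, rfl⟩ : ∃ d, c = d + 1 := ⟨c - 1, by omega⟩
    have : g = C (coeff 0 g) :=
      (totalDegree_eq_zero_iff_eq_C).1 ((totalDegree_zero_iff_isHomogeneous _).2 h)
    rw [Function.iterate_succ_apply, this, dirD_apply]
    simp [dirD_zero_iter]
  | succ m ih =>
    obtain ⟨c, rfl⟩ : ∃ d, c = d + 1 := ⟨c - 1, by omega⟩
    rw [Function.iterate_succ_apply]
    exact ih (by omega) (dirD_hom u h)

lemma dirD_iter_deg (u : Fin 2 → ℂ) {c : ℕ} {g : MvPolynomial (Fin 2) ℂ}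
    (h : g.totalDegree < c) : (dirD u)^[c] g = 0 := by
  have e : ∀ p, (dirD u)^[c] p = (((dirD u : MvPolynomial (Fin 2) ℂ →ₗ[ℂ] _)) ^ c) p := by
    intro p
    rw [Module.End.pow_apply]; rfl
  rw [e, ← sum_homogeneousComponent g, map_sum]
  refine Finset.sum_eq_zero fun i hi => ?_
  rw [← e]
  exact dirD_iter_hom u (by have := Finset.mem_range.1 hi; omega)
    (homogeneousComponent_isHomogeneous i g)

/-- The linear form vanishing at `u`. -/
noncomputable def linF (u : Fin 2 → ℂ) : MvPolynomial (Fin 2) ℂ :=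
  C (u 1) * X (0 : Fin 2) - C (u 0) * X (1 : Fin 2)

lemma dirD_linF_mul (u : Fin 2 → ℂ) (k : ℕ) (g : MvPolynomial (Fin 2) ℂ) :
    dirD u (linF u ^ k * g) = linF u ^ k * dirD u g := by
  have h : dirD u (linF u) = 0 := by
    rw [dirD_apply, linF]
    simp [pderiv_X]
    ring
  simp [Derivation.leibniz, Derivation.leibniz_pow, h]

lemma dirD_iter_linF_mul (u : Fin 2 → ℂ) (k c : ℕ) (g : MvPolynomial (Fin 2) ℂ) :
    (dirD u)^[c] (linF u ^ k * g) = linF u ^ k * (dirD u)^[c] g := by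
  induction c generalizing g with
  | zero => rfl
  | succ c ih => rw [Function.iterate_succ_apply, Function.iterate_succ_apply, dirD_linF_mul, ih]

lemma linF_hom (u : Fin 2 → ℂ) : (linF u).IsHomogeneous 1 :=
  (isHomogeneous_C_mul_X _ _).sub (isHomogeneous_C_mul_X _ _)

lemma dvd_of_C_mul {p f : MvPolynomial (Fin 2) ℂ} {a : ℂ} (ha : a ≠ 0) (h : p ∣ C a * f) :
    p ∣ f := by
  have : f = C a⁻¹ * (C a * f) := by
    rw [← mul_assoc, ← C_mul, inv_mul_cancel₀ ha, C_1, one_mul]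
  rw [this]
  exact h.mul_left _

lemma forward (u : Fin 2 → ℂ) (hu : u ≠ 0) (n : ℕ) : ∀ (c e : ℕ) (f : MvPolynomial (Fin 2) ℂ),
    f.IsHomogeneous n → e + c = n + 1 → (dirD u)^[c] f = 0 → linF u ^ e ∣ f := by
  induction n with
  | zero =>
    intro c e f hf hec h
    rcases c with _ | c
    · have : f = 0 := h
      simp [this]
    · obtain rfl : e = 0 := by omega
      simp
  | succ n ih =>
    intro c e f hf hec h
    rcases c with _ | c
    · have : f = 0 := h
      simp [this]
    rcases e with _ | e
    · simp
    have h1 : linF u ^ (e + 1) ∣ dirD u f :=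
      ih c (e + 1) _ (dirD_hom u hf) (by omega) (by rwa [Function.iterate_succ_apply] at h)
    have h2 : ∀ i, linF u ^ (e + 1) ∣ linF u * pderiv i f := fun i => by
      rw [pow_succ']
      refine mul_dvd_mul_left _ (ih (c + 1) e _ hf.pderiv (by omega) ?_)
      rw [dirD_iter_comm, h, map_zero]
    have eu := hf.sum_X_mul_pderiv
    rw [Fin.sum_univ_two, nsmul_eq_mul] at eu
    have hn : ((n + 1 : ℕ) : ℂ) ≠ 0 := by exact_mod_cast Nat.succ_ne_zero n
    have hC : ((n + 1 : ℕ) : MvPolynomial (Fin 2) ℂ) = C ((n + 1 : ℕ) : ℂ) := by simp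
    rw [hC] at eu
    by_cases h0 : u 0 = 0
    · have h1' : u 1 ≠ 0 := by
        intro h1'
        apply hu
        ext i
        fin_cases i <;> simp [h0, h1']
      apply dvd_of_C_mul hn
      apply dvd_of_C_mul h1'
      have : C (u 1) * (C ((n + 1 : ℕ) : ℂ) * f) = X 1 * dirD u f + linF u * pderiv 0 f := by
        rw [← eu, dirD_apply, linF]; ring
      rw [this]
      exact dvd_add (h1.mul_left _) (h2 0)
    · apply dvd_of_C_mul hn
      apply dvd_of_C_mul h0
      have : C (u 0) * (C ((n + 1 : ℕ) : ℂ) * f) = X 0 * dirD u f - linF u * pderiv 1 f := by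
        rw [← eu, dirD_apply, linF]; ring
      rw [this]
      exact dvd_sub (h1.mul_left _) (h2 1)

/-- for a nonzero binary form `f` of degree `n`, a nonzero direction
`u` and `1 ≤ c ≤ n`, the `c`-fold directional derivative `D_u^c f` vanishes iff
the linear form `u₂·x − u₁·y` divides `f` to the power `n − c + 1`. -/
theorem directional_derivative_vanishes_iff (n : ℕ) (hn : 1 ≤ n)
    (f : MvPolynomial (Fin 2) ℂ) (hf : f ≠ 0) (hhom : f.IsHomogeneous n)
    (u : Fin 2 → ℂ) (hu : u ≠ 0) (c : ℕ) (hc1 : 1 ≤ c) (hcn : c ≤ n) :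
    (fun g : MvPolynomial (Fin 2) ℂ =>
        C (u 0) * pderiv (0 : Fin 2) g + C (u 1) * pderiv (1 : Fin 2) g)^[c] f = 0 ↔
      (C (u 1) * X (0 : Fin 2) - C (u 0) * X (1 : Fin 2)) ^ (n - c + 1) ∣ f := by
  have e : (fun g : MvPolynomial (Fin 2) ℂ =>
        C (u 0) * pderiv (0 : Fin 2) g + C (u 1) * pderiv (1 : Fin 2) g) = dirD u := by
    funext g
    rw [dirD_apply]
  rw [e]
  change _ ↔ linF u ^ (n - c + 1) ∣ f
  constructor
  · exact forward u hu n c (n - c + 1) f hhom (by omega)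
  · rintro ⟨g, rfl⟩
    have hL := left_ne_zero_of_mul hf
    have hg := right_ne_zero_of_mul hf
    have hd := hhom.totalDegree hf
    rw [totalDegree_mul_of_isDomain hL hg, ((linF_hom u).pow _).totalDegree hL] at hd
    rw [dirD_iter_linF_mul, dirD_iter_deg u (by omega), mul_zero]
end

section
/- Let n ≥ 2 and let f = K·∏_{j=1}^{l}(a_j·x + b_j·y)^{d_j} ∈ ℂ[x,y], where K ∈ ℂ is nonzero, the vectors (a_j,b_j) ∈ ℂ² are nonzero and pairwise non-proportional, each d_j ≥ 1, and Σ_j d_j = n. Set g := conj(a₁)·∂f/∂x + conj(b₁)·∂f/∂y. Then for every i ∈ {1,…,l}: if (a_i·x + b_i·y)^{d_i} divides g, then conj(a₁)·a_i + conj(b₁)·b_i = 0. -/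
open MvPolynomial Finset

/-- for `f = K·∏_j (a_j·x + b_j·y)^{d_j}` of degree `n ≥ 2` and
`g = conj(a₁)·∂f/∂x + conj(b₁)·∂f/∂y`, if `(a_i·x + b_i·y)^{d_i}` divides `g`,
then `⟨η₁|η_i⟩ = conj(a₁)·a_i + conj(b₁)·b_i = 0`. -/
theorem degeneracy_preserved_implies_orthogonal (n l : ℕ) (hn : 2 ≤ n) (hl : 1 ≤ l)
    (K : ℂ) (hK : K ≠ 0) (a b : Fin l → ℂ) (d : Fin l → ℕ)
    (hab : ∀ j, ¬(a j = 0 ∧ b j = 0))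
    (hdist : ∀ j j', j ≠ j' → a j * b j' - a j' * b j ≠ 0)
    (hd : ∀ j, 1 ≤ d j) (hsum : ∑ j, d j = n)
    (f g : MvPolynomial (Fin 2) ℂ)
    (hf : f = C K * ∏ j, (C (a j) * X (0 : Fin 2) + C (b j) * X (1 : Fin 2)) ^ (d j))
    (hg : g = C ((starRingEnd ℂ) (a ⟨0, hl⟩)) * pderiv (0 : Fin 2) f
            + C ((starRingEnd ℂ) (b ⟨0, hl⟩)) * pderiv (1 : Fin 2) f) :
    ∀ i : Fin l,
      (C (a i) * X (0 : Fin 2) + C (b i) * X (1 : Fin 2)) ^ (d i) ∣ g →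
        (starRingEnd ℂ) (a ⟨0, hl⟩) * a i + (starRingEnd ℂ) (b ⟨0, hl⟩) * b i = 0 := by
  intro i hdvd
  set u := (starRingEnd ℂ) (a ⟨0, hl⟩) with hu
  set v := (starRingEnd ℂ) (b ⟨0, hl⟩) with hv
  set L : MvPolynomial (Fin 2) ℂ := C (a i) * X (0 : Fin 2) + C (b i) * X (1 : Fin 2) with hL
  set h : MvPolynomial (Fin 2) ℂ := C K * ∏ j ∈ univ.erase i,
    (C (a j) * X (0 : Fin 2) + C (b j) * X (1 : Fin 2)) ^ (d j) with hh
  have hfL : f = L ^ d i * h := by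
    rw [hf, hh, ← Finset.mul_prod_erase univ _ (mem_univ i)]
    ring
  obtain ⟨k, hk⟩ : ∃ k, d i = k + 1 := ⟨d i - 1, by have := hd i; omega⟩
  have hL0 : pderiv (0 : Fin 2) L = C (a i) := by
    simp [hL, pderiv_X]
  have hL1 : pderiv (1 : Fin 2) L = C (b i) := by
    simp [hL, pderiv_X]
  have hLne : L ≠ 0 := by
    intro h0
    apply hab i
    constructor
    · rw [h0, map_zero] at hL0
      simpa using hL0.symm
    · rw [h0, map_zero] at hL1
      simpa using hL1.symm
  have hgk : g = L ^ k * (C ((k + 1 : ℂ) * (u * a i + v * b i)) * h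
      + L * (C u * pderiv (0 : Fin 2) h + C v * pderiv (1 : Fin 2) h)) := by
    rw [hg, hfL, hk]
    simp only [Derivation.leibniz, Derivation.leibniz_pow, hL0, hL1, smul_eq_mul, nsmul_eq_mul,
      map_mul, map_add, map_natCast, map_one, Nat.add_sub_cancel]
    push_cast
    ring
  rw [hk, hgk, pow_succ] at hdvd
  obtain ⟨q, hq⟩ := (mul_dvd_mul_iff_left (pow_ne_zero k hLne)).1 hdvd
  have hev := congrArg (eval ![b i, - a i]) hq
  have hLe : eval ![b i, - a i] L = 0 := by
    simp [hL]; ring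
  have hhe : eval ![b i, - a i] h ≠ 0 := by
    rw [hh, map_mul, map_prod, eval_C]
    refine mul_ne_zero hK (Finset.prod_ne_zero_iff.2 fun j hj => ?_)
    rw [map_pow]
    apply pow_ne_zero
    have := hdist j i (ne_of_mem_erase hj)
    intro h0
    apply this
    simp at h0
    linear_combination h0
  rw [map_add, eval_mul, eval_C, eval_mul (p := L), eval_mul (p := L), hLe, zero_mul, zero_mul,
    add_zero] at hev
  have h1 := (mul_eq_zero.1 hev).resolve_right hhe
  exact (mul_eq_zero.1 h1).resolve_left (Nat.cast_add_one_ne_zero k)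
end

section
/- Let n ≥ 2 and let f = K·∏_{j=1}^{l}(a_j·x + b_j·y)^{d_j} ∈ ℂ[x,y], where K ∈ ℂ is nonzero, the vectors (a_j,b_j) ∈ ℂ² are nonzero and pairwise non-proportional, each d_j ≥ 1, and Σ_j d_j = n. Set g := conj(a₁)·∂f/∂x + conj(b₁)·∂f/∂y. Then for every i ∈ {1,…,l}, (a_i·x + b_i·y)^{d_i + 1} does not divide g. -/
open MvPolynomial Finset

/-- for `f = K·∏_j (a_j·x + b_j·y)^{d_j}` of degree `n ≥ 2` and
`g = conj(a₁)·∂f/∂x + conj(b₁)·∂f/∂y`, the power `(a_i·x + b_i·y)^{d_i + 1}`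
never divides `g` (i.e. `m_i ≤ d_i`). -/
theorem degeneracy_cannot_increase (n l : ℕ) (hn : 2 ≤ n) (hl : 1 ≤ l)
    (K : ℂ) (hK : K ≠ 0) (a b : Fin l → ℂ) (d : Fin l → ℕ)
    (hab : ∀ j, ¬(a j = 0 ∧ b j = 0))
    (hdist : ∀ j j', j ≠ j' → a j * b j' - a j' * b j ≠ 0)
    (hd : ∀ j, 1 ≤ d j) (hsum : ∑ j, d j = n)
    (f g : MvPolynomial (Fin 2) ℂ)
    (hf : f = C K * ∏ j, (C (a j) * X (0 : Fin 2) + C (b j) * X (1 : Fin 2)) ^ (d j))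
    (hg : g = C ((starRingEnd ℂ) (a ⟨0, hl⟩)) * pderiv (0 : Fin 2) f
            + C ((starRingEnd ℂ) (b ⟨0, hl⟩)) * pderiv (1 : Fin 2) f) :
    ∀ i : Fin l,
      ¬ ((C (a i) * X (0 : Fin 2) + C (b i) * X (1 : Fin 2)) ^ (d i + 1) ∣ g) := by
  intro i hdvd
  set v : Fin 2 → ℂ := ![(starRingEnd ℂ) (a ⟨0, hl⟩), (starRingEnd ℂ) (b ⟨0, hl⟩)] with hv
  set L : Fin l → MvPolynomial (Fin 2) ℂ :=
    fun j => C (a j) * X (0 : Fin 2) + C (b j) * X (1 : Fin 2) with hL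
  obtain ⟨h, hh⟩ : ∃ h : MvPolynomial (Fin 2) ℂ, h = C K * ∏ j ∈ univ.erase i, L j ^ d j :=
    ⟨_, rfl⟩
  have evL : ∀ (u : Fin 2 → ℂ) j, eval u (L j) = a j * u 0 + b j * u 1 := by
    intro u j; simp [hL]
  have evh : ∀ u : Fin 2 → ℂ, (∀ j, j ≠ i → a j * u 0 + b j * u 1 ≠ 0) → eval u h ≠ 0 := by
    intro u hu
    rw [hh, map_mul, eval_C, map_prod]
    refine mul_ne_zero hK (Finset.prod_ne_zero_iff.2 fun j hj => ?_)
    rw [map_pow, evL]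
    exact pow_ne_zero _ (hu j (Finset.ne_of_mem_erase hj))
  have self_ne : ∀ j, a j * (starRingEnd ℂ) (a j) + b j * (starRingEnd ℂ) (b j) ≠ 0 := by
    intro j hj
    rw [Complex.mul_conj, Complex.mul_conj, ← Complex.ofReal_add, Complex.ofReal_eq_zero] at hj
    have h1 := Complex.normSq_nonneg (a j)
    have h2 := Complex.normSq_nonneg (b j)
    exact hab j ⟨Complex.normSq_eq_zero.1 (by linarith), Complex.normSq_eq_zero.1 (by linarith)⟩
  have hLne : L i ≠ 0 := by
    intro h0
    have := evL ![(starRingEnd ℂ) (a i), (starRingEnd ℂ) (b i)] i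
    rw [h0, map_zero] at this
    exact self_ne i (by simpa using this.symm)
  have hfh : f = L i ^ d i * h := by
    rw [hf, hh, ← Finset.mul_prod_erase univ (fun j => L j ^ d j) (Finset.mem_univ i)]
    ring
  set c : ℂ := a i * v 0 + b i * v 1 with hc
  set E : MvPolynomial (Fin 2) ℂ := C (v 0) * pderiv 0 h + C (v 1) * pderiv 1 h with hE
  obtain ⟨e, he⟩ : ∃ e, d i = e + 1 := ⟨d i - 1, by have := hd i; omega⟩
  have p0 : pderiv 0 (L i) = C (a i) := by simp [hL, pderiv_X]
  have p1 : pderiv 1 (L i) = C (b i) := by simp [hL, pderiv_X]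
  have hg2 : g = L i ^ e * (C ((e + 1 : ℂ) * c) * h + L i * E) := by
    have hg' : g = C (v 0) * pderiv 0 f + C (v 1) * pderiv 1 f := by rw [hg]; simp [hv]
    rw [hg', hfh, he, Derivation.leibniz, Derivation.leibniz, Derivation.leibniz_pow,
      Derivation.leibniz_pow, p0, p1, hc, hE]
    simp only [smul_eq_mul, nsmul_eq_mul, map_mul, map_add, map_one, Nat.add_sub_cancel,
      Nat.cast_add, Nat.cast_one, map_natCast]
    ring
  obtain ⟨q, hq⟩ := hdvd
  have key : C ((e + 1 : ℂ) * c) * h + L i * E = L i ^ 2 * q := by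
    apply mul_left_cancel₀ (pow_ne_zero e hLne)
    rw [← hg2, hq, he]
    ring
  have he1 : (e + 1 : ℂ) ≠ 0 := by exact_mod_cast Nat.succ_ne_zero e
  have hc0 : c = 0 := by
    have hk := congrArg (eval ![b i, - a i]) key
    have hz : eval ![b i, - a i] (L i) = 0 := by rw [evL]; simp; ring
    rw [map_add, map_mul (eval _) (C _) h, map_mul (eval _) (L i) E,
      map_mul (eval _) (L i ^ 2) q, map_pow, hz, eval_C] at hk
    have hne : eval ![b i, - a i] h ≠ 0 := by
      apply evh
      intro j hj hj0
      apply hdist j i hj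
      simp at hj0
      linear_combination hj0
    simpa [he1, hne] using hk
  have hEq : E = L i * q := by
    apply mul_left_cancel₀ hLne
    rw [hc0] at key
    simp only [mul_zero, map_zero, zero_mul, zero_add] at key
    rw [key]; ring
  have hi : (⟨0, hl⟩ : Fin l) ≠ i := by
    intro hi
    rw [← hi] at hc
    exact self_ne ⟨0, hl⟩ (by rw [← hc0, hc]; simp [hv])
  have hhom : h.IsHomogeneous (0 + ∑ j ∈ univ.erase i, d j) := by
    rw [hh]
    refine (isHomogeneous_C _ K).mul (IsHomogeneous.prod _ _ _ fun j _ => ?_)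
    have h1 : (L j).IsHomogeneous 1 :=
      (isHomogeneous_C_mul_X _ _).add (isHomogeneous_C_mul_X _ _)
    simpa using h1.pow (d j)
  have euler := congrArg (eval v) hhom.sum_X_mul_pderiv
  have hEv : eval v E = 0 := by
    rw [hEq, map_mul, evL, ← hc, hc0, zero_mul]
  have hhv : eval v h ≠ 0 := by
    apply evh
    intro j hj hj0
    have hD := hdist j i hj
    have hc1 : a i * v 0 + b i * v 1 = 0 := by rw [← hc, hc0]
    have v0 : v 0 = 0 := by
      apply (mul_eq_zero.1 (_ : (a j * b i - a i * b j) * v 0 = 0)).resolve_left hD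
      linear_combination b i * hj0 - b j * hc1
    have v1 : v 1 = 0 := by
      apply (mul_eq_zero.1 (_ : (a j * b i - a i * b j) * v 1 = 0)).resolve_left hD
      linear_combination a j * hc1 - a i * hj0
    exact hab ⟨0, hl⟩ ⟨by simpa [hv] using v0, by simpa [hv] using v1⟩
  have hdeg : 0 + ∑ j ∈ univ.erase i, d j ≠ 0 := by
    have h1 := Finset.single_le_sum (f := d) (fun j _ => Nat.zero_le _)
      (Finset.mem_erase.2 ⟨hi, Finset.mem_univ (⟨0, hl⟩ : Fin l)⟩)
    have h2 := hd ⟨0, hl⟩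
    omega
  rw [Fin.sum_univ_two, map_nsmul, map_add, map_mul, map_mul (eval v) (X 1), eval_X, eval_X] at euler
  have hE2 : eval v E = v 0 * eval v (pderiv 0 h) + v 1 * eval v (pderiv 1 h) := by
    rw [hE]; simp
  rw [← hE2, hEv, nsmul_eq_mul] at euler
  exact mul_ne_zero (Nat.cast_ne_zero.2 hdeg) hhv euler.symm
end

section
/- Let n ≥ 2 and let f = K·∏_{j=1}^{l}(a_j·x + b_j·y)^{d_j} ∈ ℂ[x,y], where K ∈ ℂ is nonzero, the vectors (a_j,b_j) ∈ ℂ² are nonzero and pairwise non-proportional, each d_j ≥ 1, and Σ_j d_j = n. Set g := conj(a₁)·∂f/∂x + conj(b₁)·∂f/∂y, and for each i let m_i denote the largest power of (a_i·x + b_i·y) dividing g. Then for every i ∈ {1,…,l}, exactly one of the following holds: (1) m_i = d_i and conj(a₁)·a_i + conj(b₁)·b_i = 0; (2) m_i = d_i − 1 and conj(a₁)·a_i + conj(b₁)·b_i ≠ 0. -/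
open MvPolynomial Finset

/-- The linear form `p·x + q·y`. -/
noncomputable def linForm (p q : ℂ) : MvPolynomial (Fin 2) ℂ :=
  C p * X (0 : Fin 2) + C q * X (1 : Fin 2)

/-- The directional derivative. -/
noncomputable def dirDer (α β : ℂ) (f : MvPolynomial (Fin 2) ℂ) : MvPolynomial (Fin 2) ℂ :=
  C α * pderiv (0 : Fin 2) f + C β * pderiv (1 : Fin 2) f

lemma dirDer_mul (α β : ℂ) (f g : MvPolynomial (Fin 2) ℂ) :
    dirDer α β (f * g) = dirDer α β f * g + f * dirDer α β g := by
  simp only [dirDer, pderiv_mul]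
  ring

lemma dirDer_C (α β k : ℂ) : dirDer α β (C k) = 0 := by
  simp [dirDer]

lemma dirDer_linForm (α β p q : ℂ) : dirDer α β (linForm p q) = C (α * p + β * q) := by
  simp [dirDer, linForm, pderiv_mul, pderiv_X]

lemma dirDer_pow (α β : ℂ) (f : MvPolynomial (Fin 2) ℂ) (k : ℕ) :
    dirDer α β (f ^ (k + 1)) = C ((k : ℂ) + 1) * f ^ k * dirDer α β f := by
  induction k with
  | zero => simp
  | succ k ih =>
    rw [pow_succ, dirDer_mul, ih]
    push_cast
    simp only [map_add, map_one]
    ring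

lemma eval_linForm (p q : ℂ) (v : Fin 2 → ℂ) : eval v (linForm p q) = p * v 0 + q * v 1 := by
  simp [linForm]

/-- Euler's identity for products of linear forms. -/
lemma euler_prod {ι : Type*} [DecidableEq ι] (s : Finset ι) (a b : ι → ℂ) (d : ι → ℕ)
    (hd : ∀ j, 1 ≤ d j) (α β : ℂ) :
    eval ![α, β] (dirDer α β (∏ j ∈ s, linForm (a j) (b j) ^ d j))
      = (∑ j ∈ s, (d j : ℂ)) * ∏ j ∈ s, (α * a j + β * b j) ^ d j := by
  induction s using Finset.induction_on with
  | empty => simpa using congrArg (eval ![α, β]) (dirDer_C α β 1)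
  | insert i s hi ih =>
    rw [Finset.prod_insert hi, Finset.prod_insert hi, Finset.sum_insert hi, dirDer_mul]
    obtain ⟨k, hk⟩ : ∃ k, d i = k + 1 := ⟨d i - 1, by have := hd i; omega⟩
    rw [map_add, map_mul, map_mul, ih, hk, dirDer_pow, dirDer_linForm]
    simp only [map_mul, map_pow, map_prod, eval_linForm, eval_C, Matrix.cons_val_zero,
      Matrix.cons_val_one]
    have : ∏ j ∈ s, (a j * α + b j * β) ^ d j = ∏ j ∈ s, (α * a j + β * b j) ^ d j :=
      Finset.prod_congr rfl fun j _ => by ring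
    rw [this]
    push_cast
    ring

lemma mult_unique {R : Type*} [CommRing R] {L g : R} {m e : ℕ} (h1 : L ^ m ∣ g)
    (h2 : ¬ L ^ (m + 1) ∣ g) (h3 : L ^ e ∣ g) (h4 : ¬ L ^ (e + 1) ∣ g) : m = e := by
  by_contra hne
  rcases lt_or_gt_of_ne hne with h | h
  · exact h2 ((pow_dvd_pow L h).trans h3)
  · exact h4 ((pow_dvd_pow L h).trans h1)

/-- for `f = K·∏_j (a_j·x + b_j·y)^{d_j}` of degree `n ≥ 2`,
`g = conj(a₁)·∂f/∂x + conj(b₁)·∂f/∂y`, and `m_i` the largest power of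
`(a_i·x + b_i·y)` dividing `g`, exactly one of the following holds for each `i`:
(1) `m_i = d_i` and `⟨η₁|η_i⟩ = 0`; (2) `m_i = d_i − 1` and `⟨η₁|η_i⟩ ≠ 0`. -/
theorem projected_degeneracy_dichotomy (n l : ℕ) (hn : 2 ≤ n) (hl : 1 ≤ l)
    (K : ℂ) (hK : K ≠ 0) (a b : Fin l → ℂ) (d : Fin l → ℕ)
    (hab : ∀ j, ¬(a j = 0 ∧ b j = 0))
    (hdist : ∀ j j', j ≠ j' → a j * b j' - a j' * b j ≠ 0)
    (hd : ∀ j, 1 ≤ d j) (hsum : ∑ j, d j = n)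
    (f g : MvPolynomial (Fin 2) ℂ)
    (hf : f = C K * ∏ j, (C (a j) * X (0 : Fin 2) + C (b j) * X (1 : Fin 2)) ^ (d j))
    (hg : g = C ((starRingEnd ℂ) (a ⟨0, hl⟩)) * pderiv (0 : Fin 2) f
            + C ((starRingEnd ℂ) (b ⟨0, hl⟩)) * pderiv (1 : Fin 2) f)
    (m : Fin l → ℕ)
    (hm : ∀ i, (C (a i) * X (0 : Fin 2) + C (b i) * X (1 : Fin 2)) ^ (m i) ∣ g ∧
      ¬ ((C (a i) * X (0 : Fin 2) + C (b i) * X (1 : Fin 2)) ^ (m i + 1) ∣ g)) :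
    ∀ i : Fin l,
      Xor'
        (m i = d i ∧
          (starRingEnd ℂ) (a ⟨0, hl⟩) * a i + (starRingEnd ℂ) (b ⟨0, hl⟩) * b i = 0)
        (m i = d i - 1 ∧
          (starRingEnd ℂ) (a ⟨0, hl⟩) * a i + (starRingEnd ℂ) (b ⟨0, hl⟩) * b i ≠ 0) := by
  intro i
  set α := (starRingEnd ℂ) (a ⟨0, hl⟩) with hα
  set β := (starRingEnd ℂ) (b ⟨0, hl⟩) with hβ
  change g = dirDer α β f at hg
  change f = C K * ∏ j, linForm (a j) (b j) ^ d j at hf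
  obtain ⟨hm1, hm2⟩ := hm i
  change linForm (a i) (b i) ^ m i ∣ g at hm1
  change ¬ linForm (a i) (b i) ^ (m i + 1) ∣ g at hm2
  set L := linForm (a i) (b i) with hL
  set h := ∏ j ∈ univ.erase i, linForm (a j) (b j) ^ d j with hh
  obtain ⟨k, hk⟩ : ∃ k, d i = k + 1 := ⟨d i - 1, by have := hd i; omega⟩
  have hf' : f = C K * (L ^ (k + 1) * h) := by
    rw [hf, ← Finset.mul_prod_erase univ _ (Finset.mem_univ i), hk]
  have hg' : g = L ^ k * (C (K * ((k : ℂ) + 1) * (α * a i + β * b i)) * h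
      + L * (C K * dirDer α β h)) := by
    rw [hg, hf', dirDer_mul, dirDer_mul, dirDer_C, dirDer_pow, hL, dirDer_linForm]
    simp only [map_mul]
    ring
  have hL0 : L ≠ 0 := by
    intro h0
    have e0 : eval ![1, 0] L = 0 := by rw [h0, map_zero]
    have e1 : eval ![0, 1] L = 0 := by rw [h0, map_zero]
    rw [hL, eval_linForm] at e0 e1
    exact hab i ⟨by simpa using e0, by simpa using e1⟩
  by_cases hc : α * a i + β * b i = 0
  · refine Or.inl ⟨⟨?_, hc⟩, fun hx => hx.2 hc⟩
    have hg2 : g = L ^ (k + 1) * (C K * dirDer α β h) := by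
      rw [hg', hc, mul_zero, map_zero]
      ring
    rw [hk]
    refine mult_unique hm1 hm2 ⟨_, hg2⟩ ?_
    rw [hg2, pow_succ L (k + 1), mul_dvd_mul_iff_left (pow_ne_zero _ hL0)]
    rintro ⟨q, hq⟩
    have he := congrArg (eval ![α, β]) hq
    have hLv : eval ![α, β] L = 0 := by
      rw [hL, eval_linForm]
      simp only [Matrix.cons_val_zero, Matrix.cons_val_one]
      linear_combination hc
    rw [map_mul, map_mul, hLv, eval_C, hh, euler_prod _ _ _ _ hd, zero_mul] at he
    have hαβ : ¬ (α = 0 ∧ β = 0) := by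
      rintro ⟨h1, h2⟩
      exact hab ⟨0, hl⟩ ⟨by simpa [hα] using h1, by simpa [hβ] using h2⟩
    have hi0 : (⟨0, hl⟩ : Fin l) ≠ i := by
      rintro rfl
      have h1 : ((Complex.normSq (a ⟨0, hl⟩) + Complex.normSq (b ⟨0, hl⟩) : ℝ) : ℂ) = 0 := by
        push_cast
        rw [Complex.normSq_eq_conj_mul_self, Complex.normSq_eq_conj_mul_self]
        exact hc
      have h2 : Complex.normSq (a ⟨0, hl⟩) + Complex.normSq (b ⟨0, hl⟩) = 0 := by
        exact_mod_cast h1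
      have h3 := Complex.normSq_nonneg (a ⟨0, hl⟩)
      have h4 := Complex.normSq_nonneg (b ⟨0, hl⟩)
      exact hab ⟨0, hl⟩ ⟨Complex.normSq_eq_zero.1 (by linarith),
        Complex.normSq_eq_zero.1 (by linarith)⟩
    have hs : (∑ j ∈ univ.erase i, (d j : ℂ)) ≠ 0 := by
      rw [← Nat.cast_sum, Nat.cast_ne_zero]
      have := Finset.single_le_sum (f := d) (fun j _ => Nat.zero_le _)
        (Finset.mem_erase.2 ⟨hi0, Finset.mem_univ _⟩)
      have := hd ⟨0, hl⟩
      omega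
    have hp : ∏ j ∈ univ.erase i, (α * a j + β * b j) ^ d j ≠ 0 := by
      refine Finset.prod_ne_zero_iff.2 fun j hj => pow_ne_zero _ fun hcj => ?_
      have hD := hdist i j (Finset.ne_of_mem_erase hj).symm
      refine hαβ ⟨?_, ?_⟩
      · refine (mul_eq_zero.1 (?_ : (a i * b j - a j * b i) * α = 0)).resolve_left hD
        linear_combination b j * hc - b i * hcj
      · refine (mul_eq_zero.1 (?_ : (a i * b j - a j * b i) * β = 0)).resolve_left hD
        linear_combination a i * hcj - a j * hc
    exact mul_ne_zero hK (mul_ne_zero hs hp) he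
  · refine Or.inr ⟨⟨?_, hc⟩, fun hx => hc hx.2⟩
    rw [hk, Nat.add_sub_cancel]
    refine mult_unique hm1 hm2 ⟨_, hg'⟩ ?_
    rw [hg', pow_succ L k, mul_dvd_mul_iff_left (pow_ne_zero _ hL0)]
    rintro ⟨q, hq⟩
    have he := congrArg (eval ![b i, -a i]) hq
    have hLv : eval ![b i, -a i] L = 0 := by
      rw [hL, eval_linForm]
      simp only [Matrix.cons_val_zero, Matrix.cons_val_one]
      ring
    simp only [map_add, map_mul (eval ![b i, -a i]), hLv, eval_C, zero_mul, add_zero] at he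
    refine mul_ne_zero (mul_ne_zero (mul_ne_zero hK (Nat.cast_add_one_ne_zero k)) hc) ?_ he
    rw [hh, map_prod]
    refine Finset.prod_ne_zero_iff.2 fun j hj => ?_
    rw [map_pow, eval_linForm]
    refine pow_ne_zero _ fun h0 => hdist j i (Finset.ne_of_mem_erase hj) ?_
    simp only [Matrix.cons_val_zero, Matrix.cons_val_one] at h0
    linear_combination h0
end

section
/- Let n ≥ 2, let f ∈ ℂ[x,y] be a nonzero homogeneous polynomial of degree n, let (a,b) ∈ ℂ² be nonzero with (a·x + b·y) dividing f, and set g := conj(a)·∂f/∂x + conj(b)·∂f/∂y. Then the following are equivalent: (i) every nonzero (c,d) ∈ ℂ² such that (c·x + d·y) divides g also satisfies that (c·x + d·y) divides f; (ii) f = K·(a₁·x + b₁·y)^p·(a₂·x + b₂·y)^{n−p} for some nonzero K ∈ ℂ, some integer 0 ≤ p ≤ n, and some nonzero vectors (a₁,b₁), (a₂,b₂) ∈ ℂ² with conj(a₁)·a₂ + conj(b₁)·b₂ = 0. -/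
open MvPolynomial

lemma aux_scale {A : Type*} [CommRing A] [Algebra ℂ A] {n : ℕ} {f : MvPolynomial (Fin 2) ℂ}
    (hf : f.IsHomogeneous n) (c : A) (φ : Fin 2 → A) :
    aeval (fun i => c * φ i) f = c ^ n * aeval φ f := by
  rw [aeval_def, aeval_def, eval₂_eq', eval₂_eq', Finset.mul_sum]
  refine Finset.sum_congr rfl fun d hd => ?_
  have h := hf (mem_support_iff.mp hd)
  rw [Finsupp.weight_apply, Finsupp.sum_fintype _ _ (by simp)] at h
  simp only [Fin.sum_univ_two, Pi.one_apply, smul_eq_mul, mul_one] at h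
  simp only [Fin.prod_univ_two, mul_pow]
  rw [← h, pow_add]
  ring

lemma aux_dvd {n : ℕ} {f : MvPolynomial (Fin 2) ℂ} (hf : f.IsHomogeneous n) (P : Fin 2 → ℂ)
    (hP : ¬ (P 0 = 0 ∧ P 1 = 0)) (h0 : aeval P f = 0) :
    (C (P 1) * X (0 : Fin 2) + C (-P 0) * X (1 : Fin 2)) ∣ f := by
  set L : MvPolynomial (Fin 2) ℂ := C (P 1) * X (0 : Fin 2) + C (-P 0) * X (1 : Fin 2) with hL
  rw [← Ideal.mem_span_singleton, ← Ideal.Quotient.eq_zero_iff_mem]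
  set I := Ideal.span {L}
  let q := Ideal.Quotient.mkₐ ℂ I
  change q f = 0
  have hqL : q L = 0 := by
    change Ideal.Quotient.mk I L = 0
    rw [Ideal.Quotient.eq_zero_iff_mem]
    exact Ideal.mem_span_singleton_self L
  have hC : ∀ z : ℂ, q (C z) = algebraMap ℂ _ z := fun z => q.commutes z
  have hrel : algebraMap ℂ _ (P 1) * q (X 0) = algebraMap ℂ _ (P 0) * q (X 1) := by
    rw [hL, map_add, map_mul, map_mul, hC, hC, map_neg] at hqL
    linear_combination hqL
  have hinv : ∀ z : ℂ, z ≠ 0 →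
      algebraMap ℂ (MvPolynomial (Fin 2) ℂ ⧸ I) z⁻¹ * algebraMap ℂ _ z = 1 := by
    intro z hz
    rw [← map_mul, inv_mul_cancel₀ hz, map_one]
  obtain ⟨c, hc⟩ : ∃ c : MvPolynomial (Fin 2) ℂ ⧸ I,
      ∀ i, q (X i) = c * algebraMap ℂ _ (P i) := by
    by_cases h : P 0 = 0
    · have h1 : P 1 ≠ 0 := fun h1 => hP ⟨h, h1⟩
      refine ⟨algebraMap ℂ _ (P 1)⁻¹ * q (X 1), fun i => ?_⟩
      have := hinv _ h1
      fin_cases i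
      · change q (X 0) = _ * algebraMap ℂ _ (P 0)
        linear_combination (-q (X 0)) * this + algebraMap ℂ _ (P 1)⁻¹ * hrel
      · change q (X 1) = _ * algebraMap ℂ _ (P 1)
        linear_combination (-q (X 1)) * this
    · refine ⟨algebraMap ℂ _ (P 0)⁻¹ * q (X 0), fun i => ?_⟩
      have := hinv _ h
      fin_cases i
      · change q (X 0) = _ * algebraMap ℂ _ (P 0)
        linear_combination (-q (X 0)) * this
      · change q (X 1) = _ * algebraMap ℂ _ (P 1)
        linear_combination (-q (X 1)) * this - algebraMap ℂ _ (P 0)⁻¹ * hrel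
  have h1 : q f = aeval (fun i => q (X i)) f := by
    rw [← comp_aeval_apply, aeval_X_left_apply]
  rw [h1, funext hc, aux_scale hf]
  have h2 := aeval_algebraMap_apply (MvPolynomial (Fin 2) ℂ ⧸ I) P f
  rw [h0, map_zero] at h2
  change c ^ n * aeval (algebraMap ℂ (MvPolynomial (Fin 2) ℂ ⧸ I) ∘ P) f = 0
  rw [h2, mul_zero]

lemma aux_uni (F : Polynomial ℂ) (hF : F ≠ 0) (h0 : F.IsRoot 0)
    (h : ∀ r, F.derivative.IsRoot r → F.IsRoot r) :
    ∃ K : ℂ, K ≠ 0 ∧ F = Polynomial.C K * Polynomial.X ^ F.natDegree := by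
  classical
  have hsplit : F.Splits := IsAlgClosed.splits F
  have hcard : F.roots.card = F.natDegree := IsAlgClosed.card_roots_eq_natDegree
  have hcard' : F.derivative.roots.card = F.derivative.natDegree :=
    IsAlgClosed.card_roots_eq_natDegree
  have hd : F.derivative.natDegree = F.natDegree - 1 := Polynomial.natDegree_derivative F
  have hmem0 : (0 : ℂ) ∈ F.roots := (Polynomial.mem_roots hF).2 h0
  have hpos : 0 < F.natDegree := by
    rw [← hcard]; exact Multiset.card_pos_iff_exists_mem.2 ⟨0, hmem0⟩
  have hd0 : F.derivative ≠ 0 := by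
    intro hz
    have := Polynomial.natDegree_eq_zero_of_derivative_eq_zero hz
    omega
  have e1 : ∑ r ∈ F.roots.toFinset, F.roots.count r = F.roots.card :=
    Multiset.toFinset_sum_count_eq _
  have e2 : ∑ r ∈ F.roots.toFinset, F.derivative.roots.count r = F.derivative.roots.card := by
    apply Multiset.sum_count_eq_card
    intro r hr
    rw [Multiset.mem_toFinset, Polynomial.mem_roots hF]
    exact h r ((Polynomial.mem_roots hd0).1 hr)
  have e3 : ∀ r ∈ F.roots.toFinset, F.roots.count r = F.derivative.roots.count r + 1 := by
    intro r hr
    rw [Multiset.mem_toFinset] at hr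
    have hr' := (Polynomial.mem_roots hF).1 hr
    rw [Polynomial.count_roots, Polynomial.count_roots,
      Polynomial.derivative_rootMultiplicity_of_root hr']
    have := (Polynomial.rootMultiplicity_pos hF).2 hr'
    omega
  rw [Finset.sum_congr rfl e3, Finset.sum_add_distrib, e2] at e1
  simp only [Finset.sum_const, smul_eq_mul, mul_one] at e1
  have hS : F.roots.toFinset.card = 1 := by omega
  obtain ⟨z, hz⟩ := Finset.card_eq_one.1 hS
  have hz0 : z = 0 := by
    have : (0 : ℂ) ∈ F.roots.toFinset := Multiset.mem_toFinset.2 hmem0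
    rw [hz, Finset.mem_singleton] at this
    exact this.symm
  have hrep : F.roots = Multiset.replicate F.natDegree 0 := by
    rw [Multiset.eq_replicate]
    refine ⟨hcard, fun b hb => ?_⟩
    rw [← Multiset.mem_toFinset, hz, Finset.mem_singleton] at hb
    rw [hb, hz0]
  refine ⟨F.leadingCoeff, Polynomial.leadingCoeff_ne_zero.2 hF, ?_⟩
  have := hsplit.eq_prod_roots
  rw [hrep] at this
  simpa using this

/-- restriction to the affine line `v = const` -/
noncomputable def auxLine (a b : ℂ) : Fin 2 → Polynomial ℂ :=
  ![Polynomial.C ((starRingEnd ℂ) a) * Polynomial.X + Polynomial.C (-b),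
    Polynomial.C ((starRingEnd ℂ) b) * Polynomial.X + Polynomial.C a]

lemma aux_chain (a b : ℂ) (f : MvPolynomial (Fin 2) ℂ) :
    (aeval (auxLine a b) f).derivative = aeval (auxLine a b)
      (C ((starRingEnd ℂ) a) * pderiv (0 : Fin 2) f
            + C ((starRingEnd ℂ) b) * pderiv (1 : Fin 2) f) := by
  induction f using MvPolynomial.induction_on with
  | C z => simp
  | add p q hp hq =>
    simp only [map_add, hp, hq, map_mul]
    ring
  | mul_X p i hp =>
    simp only [map_add, map_mul] at hp
    simp only [map_add, map_mul, Polynomial.derivative_mul, hp, pderiv_mul]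
    fin_cases i
    · simp [auxLine]
      ring
    · simp [auxLine]
      ring

lemma aux_eval_line (a b r : ℂ) (f : MvPolynomial (Fin 2) ℂ) :
    (aeval (auxLine a b) f).eval r =
      aeval ![(starRingEnd ℂ) a * r - b, (starRingEnd ℂ) b * r + a] f := by
  have : (aeval (auxLine a b) f).eval r = Polynomial.aeval r (aeval (auxLine a b) f) := by
    simp [Polynomial.aeval_def, Polynomial.eval₂_eq_eval_map]
  rw [this, comp_aeval_apply]
  congr 2
  funext i
  fin_cases i <;> simp [auxLine] <;> ring

lemma aux_norm_ne {a b : ℂ} (hab : ¬(a = 0 ∧ b = 0)) :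
    (starRingEnd ℂ) a * a + (starRingEnd ℂ) b * b ≠ 0 := by
  rw [← Complex.normSq_eq_conj_mul_self, ← Complex.normSq_eq_conj_mul_self]
  intro h
  have h' : Complex.normSq a + Complex.normSq b = 0 := by exact_mod_cast h
  have h1 := Complex.normSq_nonneg a
  have h2 := Complex.normSq_nonneg b
  exact hab ⟨Complex.normSq_eq_zero.1 (by linarith), Complex.normSq_eq_zero.1 (by linarith)⟩

lemma aux_lin_ne {a b : ℂ} (hab : ¬(a = 0 ∧ b = 0)) :
    (C a * X (0 : Fin 2) + C b * X (1 : Fin 2) : MvPolynomial (Fin 2) ℂ) ≠ 0 := by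
  intro h
  have h1 := congrArg (aeval (![(starRingEnd ℂ) a, (starRingEnd ℂ) b] : Fin 2 → ℂ)) h
  simp at h1
  exact aux_norm_ne hab (by linear_combination h1)

lemma aux_lin_hom (a b : ℂ) :
    (C a * X (0 : Fin 2) + C b * X (1 : Fin 2) : MvPolynomial (Fin 2) ℂ).IsHomogeneous 1 :=
  (isHomogeneous_C_mul_X a 0).add (isHomogeneous_C_mul_X b 1)

lemma aux_inj {n : ℕ} {f : MvPolynomial (Fin 2) ℂ} (hf : f.IsHomogeneous n) {a b : ℂ}
    (hab : ¬(a = 0 ∧ b = 0)) (h : aeval (auxLine a b) f = 0) : f = 0 := by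
  set v : MvPolynomial (Fin 2) ℂ :=
    C (-(starRingEnd ℂ) b) * X (0 : Fin 2) + C ((starRingEnd ℂ) a) * X (1 : Fin 2) with hv
  have hv0 : v ≠ 0 := by
    apply aux_lin_ne
    rintro ⟨h1, h2⟩
    exact hab ⟨by simpa using h2, by simpa using h1⟩
  have hN := aux_norm_ne hab
  have : v * f = 0 := by
    apply MvPolynomial.funext
    intro x
    rw [map_mul, map_zero]
    by_cases hx : eval x v = 0
    · rw [hx, zero_mul]
    · have hx' : -(starRingEnd ℂ) b * x 0 + (starRingEnd ℂ) a * x 1 ≠ 0 := by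
        simpa [hv] using hx
      have hxe : x = fun i => ((-(starRingEnd ℂ) b * x 0 + (starRingEnd ℂ) a * x 1) /
          ((starRingEnd ℂ) a * a + (starRingEnd ℂ) b * b)) *
          (![(starRingEnd ℂ) a * ((a * x 0 + b * x 1) /
              (-(starRingEnd ℂ) b * x 0 + (starRingEnd ℂ) a * x 1)) - b,
            (starRingEnd ℂ) b * ((a * x 0 + b * x 1) /
              (-(starRingEnd ℂ) b * x 0 + (starRingEnd ℂ) a * x 1)) + a] : Fin 2 → ℂ) i := by
        funext i
        generalize (starRingEnd ℂ) a = a' at *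
        generalize (starRingEnd ℂ) b = b' at *
        generalize hw : -b' * x 0 + a' * x 1 = w at *
        fin_cases i
        · simp
          field_simp
          rw [← hw]; ring
        · simp
          field_simp
          rw [← hw]; ring
      have : eval x f = 0 := by
        rw [← coe_aeval_eq_eval]
        change aeval x f = 0
        rw [hxe, aux_scale hf, ← aux_eval_line, h]
        simp
      rw [this, mul_zero]
  exact (mul_eq_zero.1 this).resolve_left hv0

lemma aux_forward {n : ℕ} {f : MvPolynomial (Fin 2) ℂ} (hf : f ≠ 0) (hhom : f.IsHomogeneous n)
    {a b : ℂ} (hab : ¬(a = 0 ∧ b = 0))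
    (hdvd : (C a * X (0 : Fin 2) + C b * X (1 : Fin 2)) ∣ f)
    (hi : ∀ c d : ℂ, ¬(c = 0 ∧ d = 0) →
        (C c * X (0 : Fin 2) + C d * X (1 : Fin 2)) ∣ (C ((starRingEnd ℂ) a) * pderiv (0 : Fin 2) f
            + C ((starRingEnd ℂ) b) * pderiv (1 : Fin 2) f) →
        (C c * X (0 : Fin 2) + C d * X (1 : Fin 2)) ∣ f) :
    ∃ (K : ℂ) (p : ℕ), K ≠ 0 ∧ p ≤ n ∧
        f = C K * (C a * X (0 : Fin 2) + C b * X (1 : Fin 2)) ^ p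
              * (C (-(starRingEnd ℂ) b) * X (0 : Fin 2) +
                  C ((starRingEnd ℂ) a) * X (1 : Fin 2)) ^ (n - p) := by
  have hN := aux_norm_ne hab
  set F := aeval (auxLine a b) f with hFdef
  have hF : F ≠ 0 := fun h => hf (aux_inj hhom hab h)
  have h0 : F.IsRoot 0 := by
    rw [Polynomial.IsRoot, aux_eval_line]
    obtain ⟨k, rfl⟩ := hdvd
    rw [map_mul]
    simp
    left; ring
  have hghom : (C ((starRingEnd ℂ) a) * pderiv (0 : Fin 2) f
            + C ((starRingEnd ℂ) b) * pderiv (1 : Fin 2) f).IsHomogeneous (n - 1) := by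
    refine IsHomogeneous.add ?_ ?_
    · exact (hhom.pderiv).C_mul _
    · exact (hhom.pderiv).C_mul _
  have hroot : ∀ r, F.derivative.IsRoot r → F.IsRoot r := by
    intro r hr
    rw [Polynomial.IsRoot, hFdef, aux_chain, aux_eval_line] at hr
    have hP : ¬ ((starRingEnd ℂ) a * r - b = 0 ∧ (starRingEnd ℂ) b * r + a = 0) := by
      rintro ⟨h1, h2⟩
      exact hN (by linear_combination (starRingEnd ℂ) a * h2 - (starRingEnd ℂ) b * h1)
    have hd := aux_dvd hghom _ (by simpa using hP) hr
    have hd2 := hi _ _ (by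
      rintro ⟨h1, h2⟩
      exact hP ⟨neg_eq_zero.1 h2, h1⟩) hd
    rw [Polynomial.IsRoot, hFdef, aux_eval_line]
    obtain ⟨k, hk⟩ := hd2
    rw [hk, map_mul]
    simp
    left; ring
  obtain ⟨K, hK, hFK⟩ := aux_uni F hF h0 hroot
  have hle : F.natDegree ≤ n := by
    have := MvPolynomial.aeval_natDegree_le f hhom.totalDegree_le (n := 1) (auxLine a b) (by
      intro i
      fin_cases i <;> exact Polynomial.natDegree_linear_le)
    simpa using this
  set N := (starRingEnd ℂ) a * a + (starRingEnd ℂ) b * b with hNdef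
  refine ⟨K / N ^ n, F.natDegree, div_ne_zero hK (pow_ne_zero _ hN), hle, ?_⟩
  rw [← sub_eq_zero]
  refine aux_inj (n := n) (hhom.sub ?_) hab ?_
  · have h1 := (aux_lin_hom a b).pow F.natDegree
    have h2 := (aux_lin_hom (-(starRingEnd ℂ) b) ((starRingEnd ℂ) a)).pow (n - F.natDegree)
    have h3 := (h1.C_mul (K / N ^ n)).mul h2
    rwa [one_mul, one_mul, Nat.add_sub_cancel' hle] at h3
  · have e1 : aeval (auxLine a b) (C a * X (0 : Fin 2) + C b * X (1 : Fin 2)) =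
        Polynomial.C N * Polynomial.X := by
      simp [auxLine, hNdef]
      ring
    have e2 : aeval (auxLine a b) (C (-(starRingEnd ℂ) b) * X (0 : Fin 2) +
                  C ((starRingEnd ℂ) a) * X (1 : Fin 2)) = Polynomial.C N := by
      simp [auxLine, hNdef]
      ring
    have e3 : aeval (auxLine a b) (C (K / N ^ n)) = Polynomial.C (K / N ^ n) := by simp
    rw [map_sub, map_mul, map_mul, map_pow, map_pow, e1, e2, e3, ← hFdef, sub_eq_zero]
    conv_lhs => rw [hFK]
    generalize F.natDegree = k at hle
    obtain ⟨m, rfl⟩ := Nat.exists_eq_add_of_le hle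
    have : K = K / N ^ (k + m) * N ^ k * N ^ m := by
      rw [mul_assoc, ← pow_add, div_mul_cancel₀ _ (pow_ne_zero _ hN)]
    conv_lhs => rw [this]
    simp only [Polynomial.C_mul, Polynomial.C_pow, Nat.add_sub_cancel_left]
    ring

lemma aux_backward {p q : ℕ} {a b a₁ b₁ a₂ b₂ K : ℂ} (hK : K ≠ 0) (hab : ¬(a = 0 ∧ b = 0))
    (h1 : ¬(a₁ = 0 ∧ b₁ = 0))
    (horth : (starRingEnd ℂ) a₁ * a₂ + (starRingEnd ℂ) b₁ * b₂ = 0)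
    (hp : p ≠ 0) (hpar : a₁ * b = b₁ * a) (f : MvPolynomial (Fin 2) ℂ)
    (hf : f = C K * (C a₁ * X (0 : Fin 2) + C b₁ * X (1 : Fin 2)) ^ p
              * (C a₂ * X (0 : Fin 2) + C b₂ * X (1 : Fin 2)) ^ q) :
    (C ((starRingEnd ℂ) a) * pderiv (0 : Fin 2) f
            + C ((starRingEnd ℂ) b) * pderiv (1 : Fin 2) f) ∣ f := by
  obtain ⟨t, ht, rfl, rfl⟩ : ∃ t : ℂ, t ≠ 0 ∧ a = t * a₁ ∧ b = t * b₁ := by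
    by_cases ha : a₁ = 0
    · have hb : b₁ ≠ 0 := fun hb => h1 ⟨ha, hb⟩
      have ha0 : a = 0 := by
        rw [ha, zero_mul] at hpar
        exact (mul_eq_zero.1 hpar.symm).resolve_left hb
      refine ⟨b / b₁, div_ne_zero (fun h => hab ⟨ha0, h⟩) hb, by simp [ha0, ha], ?_⟩
      field_simp
    · have : b = a / a₁ * b₁ := by
        field_simp
        linear_combination hpar
      refine ⟨a / a₁, div_ne_zero (fun h => hab ⟨h, ?_⟩) ha, ?_, this⟩
      · rw [this, h]; simp
      · field_simp
  have hN := aux_norm_ne h1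
  obtain ⟨m, rfl⟩ := Nat.exists_eq_succ_of_ne_zero hp
  have hm : ((m : ℂ) + 1) ≠ 0 := by exact_mod_cast Nat.succ_ne_zero m
  have ht' : (starRingEnd ℂ) t ≠ 0 := by simpa using ht
  set s := (starRingEnd ℂ) t * ((starRingEnd ℂ) a₁ * a₁ + (starRingEnd ℂ) b₁ * b₁) * (m + 1)
    with hs
  have hs0 : s ≠ 0 := mul_ne_zero (mul_ne_zero ht' hN) hm
  set L₁ : MvPolynomial (Fin 2) ℂ := C a₁ * X (0 : Fin 2) + C b₁ * X (1 : Fin 2) with hL₁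
  set L₂ : MvPolynomial (Fin 2) ℂ := C a₂ * X (0 : Fin 2) + C b₂ * X (1 : Fin 2) with hL₂
  have d10 : pderiv 0 L₁ = C a₁ := by simp [hL₁, pderiv_X]
  have d11 : pderiv 1 L₁ = C b₁ := by simp [hL₁, pderiv_X]
  have d20 : pderiv 0 L₂ = C a₂ := by simp [hL₂, pderiv_X]
  have d21 : pderiv 1 L₂ = C b₂ := by simp [hL₂, pderiv_X]
  have key : C ((starRingEnd ℂ) (t * a₁)) * pderiv (0 : Fin 2) f
            + C ((starRingEnd ℂ) (t * b₁)) * pderiv (1 : Fin 2) f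
      = C s * (C K * L₁ ^ m * L₂ ^ q) := by
    have ho : (C ((starRingEnd ℂ) a₁) * C a₂ + C ((starRingEnd ℂ) b₁) * C b₂ :
        MvPolynomial (Fin 2) ℂ) = 0 := by
      rw [← C_mul, ← C_mul, ← C_add, horth, C_0]
    rw [hf]
    simp only [pderiv_mul, pderiv_pow, pderiv_C, d10, d11, d20, d21, hs, map_mul, map_add,
      Nat.succ_eq_add_one, Nat.add_sub_cancel]
    simp only [map_natCast, map_one, Nat.cast_add, Nat.cast_one]
    linear_combination (C ((starRingEnd ℂ) t) * C K * L₁ ^ (m + 1) * q * L₂ ^ (q - 1)) * ho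
  rw [key]
  refine ⟨C s⁻¹ * L₁, ?_⟩
  have : (C s * C s⁻¹ : MvPolynomial (Fin 2) ℂ) = 1 := by
    rw [← C_mul, mul_inv_cancel₀ hs0, C_1]
  rw [hf, Nat.succ_eq_add_one]
  linear_combination (-C K * L₁ ^ (m + 1) * L₂ ^ q) * this


/-- for a nonzero degree-`n` binary form `f` (n ≥ 2) with linear
factor `a·x + b·y`, and `g = conj(a)·∂f/∂x + conj(b)·∂f/∂y`: every linear factor
of `g` is a linear factor of `f` iff `f` is (up to scalar) a product of powers of
two linear forms with orthogonal coefficient vectors (i.e. a rotated Dicke state). -/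
theorem mp_containment_iff_dicke (n : ℕ) (hn : 2 ≤ n)
    (f : MvPolynomial (Fin 2) ℂ) (hf : f ≠ 0) (hhom : f.IsHomogeneous n)
    (a b : ℂ) (hab : ¬(a = 0 ∧ b = 0))
    (hdvd : (C a * X (0 : Fin 2) + C b * X (1 : Fin 2)) ∣ f)
    (g : MvPolynomial (Fin 2) ℂ)
    (hg : g = C ((starRingEnd ℂ) a) * pderiv (0 : Fin 2) f
            + C ((starRingEnd ℂ) b) * pderiv (1 : Fin 2) f) :
    (∀ c d : ℂ, ¬(c = 0 ∧ d = 0) →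
        (C c * X (0 : Fin 2) + C d * X (1 : Fin 2)) ∣ g →
        (C c * X (0 : Fin 2) + C d * X (1 : Fin 2)) ∣ f) ↔
      ∃ (K : ℂ) (p : ℕ) (a₁ b₁ a₂ b₂ : ℂ), K ≠ 0 ∧ p ≤ n ∧
        ¬(a₁ = 0 ∧ b₁ = 0) ∧ ¬(a₂ = 0 ∧ b₂ = 0) ∧
        (starRingEnd ℂ) a₁ * a₂ + (starRingEnd ℂ) b₁ * b₂ = 0 ∧
        f = C K * (C a₁ * X (0 : Fin 2) + C b₁ * X (1 : Fin 2)) ^ p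
              * (C a₂ * X (0 : Fin 2) + C b₂ * X (1 : Fin 2)) ^ (n - p) := by
  subst hg
  constructor
  · intro hi
    obtain ⟨K, p, hK, hp, h⟩ := aux_forward hf hhom hab hdvd hi
    refine ⟨K, p, a, b, _, _, hK, hp, hab, ?_, ?_, h⟩
    · rintro ⟨h1, h2⟩
      exact hab ⟨by simpa using h2, by simpa using h1⟩
    · ring
  · rintro ⟨K, p, a₁, b₁, a₂, b₂, hK, hp, h1, h2, horth, h⟩ c d - hcd
    refine hcd.trans ?_
    have hz : aeval (![-b, a] : Fin 2 → ℂ) f = 0 := by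
      obtain ⟨k, rfl⟩ := hdvd
      rw [map_mul]
      simp
      left; ring
    rw [h] at hz
    simp only [map_mul, map_pow, mul_eq_zero, pow_eq_zero_iff'] at hz
    simp [hK] at hz
    rcases hz with ⟨hz, hp0⟩ | ⟨hz, hq0⟩
    · exact aux_backward hK hab h1 horth hp0 (by linear_combination -hz) f h
    · refine aux_backward (p := n - p) (q := p) hK hab h2 (a₂ := a₁) (b₂ := b₁) ?_ (by omega)
        (by linear_combination -hz) f (by rw [h]; ring)
      have := congrArg (starRingEnd ℂ) horth
      simp at this
      linear_combination this
end

section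
/- Let n ≥ 2 and let f ∈ ℂ[x,y] be a nonzero homogeneous polynomial of degree n which is NOT of the form K·(a₁·x + b₁·y)^p·(a₂·x + b₂·y)^{n−p} with K ∈ ℂ nonzero, 0 ≤ p ≤ n, and nonzero (a₁,b₁), (a₂,b₂) ∈ ℂ² satisfying conj(a₁)·a₂ + conj(b₁)·b₂ = 0. Then for every nonzero (a,b) ∈ ℂ² with (a·x + b·y) dividing f, setting g := conj(a)·∂f/∂x + conj(b)·∂f/∂y, there exists a nonzero (c,d) ∈ ℂ² such that (c·x + d·y) divides g but (c·x + d·y) does not divide f; consequently f(−d,c) ≠ 0, g(−d,c) = 0, and f(−b,a) = 0. -/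
open MvPolynomial

theorem hardy_scale {A : Type*} [CommRing A] [Algebra ℂ A] {n : ℕ}
    {p : MvPolynomial (Fin 2) ℂ} (hp : p.IsHomogeneous n) (z : A) (w : Fin 2 → A) :
    aeval (fun i => z * w i) p = z ^ n * aeval w p := by
  rw [aeval_def, aeval_def, eval₂_eq', eval₂_eq', Finset.mul_sum]
  refine Finset.sum_congr rfl fun s hs => ?_
  have h1 := hp (mem_support_iff.mp hs)
  have h2 : s 0 + s 1 = n := by
    rw [← h1, Finsupp.weight_apply, Finsupp.sum_fintype _ _ (by simp)]
    simp
  rw [Fin.prod_univ_two, Fin.prod_univ_two, ← h2]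
  ring

theorem hardy_dvd {n : ℕ} {p : MvPolynomial (Fin 2) ℂ} (hp : p.IsHomogeneous n) {c d : ℂ}
    (hcd : ¬(c = 0 ∧ d = 0)) (h0 : eval ![-d, c] p = 0) :
    (C c * X (0 : Fin 2) + C d * X (1 : Fin 2)) ∣ p := by
  obtain ⟨s, t, hst⟩ : ∃ s t : ℂ, s * c + t * d = 1 := by
    by_cases hc : c = 0
    · have hd : d ≠ 0 := fun h => hcd ⟨hc, h⟩
      exact ⟨0, d⁻¹, by field_simp; simp⟩
    · exact ⟨c⁻¹, 0, by field_simp; simp⟩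
  have hstC : (C s * C c + C t * C d : MvPolynomial (Fin 2) ℂ) = 1 := by
    rw [← C_mul, ← C_mul, ← C_add, hst, C_1]
  set l : MvPolynomial (Fin 2) ℂ := C c * X (0 : Fin 2) + C d * X (1 : Fin 2) with hl
  let Z : MvPolynomial (Fin 2) ℂ := - C t * X 0 + C s * X 1
  have h1 : aeval (fun i => Z * (![C (-d), C c] : Fin 2 → MvPolynomial (Fin 2) ℂ) i) p = 0 := by
    rw [hardy_scale hp]
    have : aeval (![C (-d), C c] : Fin 2 → MvPolynomial (Fin 2) ℂ) p
        = C (eval ![-d, c] p) := by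
      have e : (![C (-d), C c] : Fin 2 → MvPolynomial (Fin 2) ℂ)
          = fun i => algebraMap ℂ _ ((![-d, c] : Fin 2 → ℂ) i) := by
        funext i; fin_cases i <;> rfl
      rw [e, ← MvPolynomial.aeval_eq_eval]
      exact MvPolynomial.aeval_algebraMap_apply _ _ _
    rw [this, h0]; simp
  rw [← Ideal.mem_span_singleton, ← Ideal.Quotient.eq_zero_iff_mem]
  have h2 := congrArg (Ideal.Quotient.mkₐ ℂ (Ideal.span {l})) h1
  rw [map_zero, MvPolynomial.comp_aeval_apply] at h2
  have h3 : (Ideal.Quotient.mkₐ ℂ (Ideal.span {l})) p = 0 := by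
    rw [← h2]
    conv_lhs => rw [← MvPolynomial.aeval_X_left_apply p, MvPolynomial.comp_aeval_apply]
    congr 2
    funext i
    simp only [Ideal.Quotient.mkₐ_eq_mk]
    rw [Ideal.Quotient.eq, Ideal.mem_span_singleton]
    fin_cases i
    · refine ⟨C s, ?_⟩
      simp [Z, hl]
      linear_combination (-X 0) * hstC
    · refine ⟨C t, ?_⟩
      simp [Z, hl]
      linear_combination (-X 1) * hstC
  exact h3

theorem hardy_chain (p : MvPolynomial (Fin 2) ℂ) (a b c d : ℂ) :
    Polynomial.derivative (aeval ![Polynomial.C a * Polynomial.X + Polynomial.C b,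
      Polynomial.C c * Polynomial.X + Polynomial.C d] p) =
    aeval ![Polynomial.C a * Polynomial.X + Polynomial.C b,
      Polynomial.C c * Polynomial.X + Polynomial.C d]
      (C a * pderiv (0 : Fin 2) p + C c * pderiv (1 : Fin 2) p) := by
  induction p using MvPolynomial.induction_on with
  | C r => simp
  | add p q hp hq =>
    simp only [map_add, hp, hq, map_mul]
    ring
  | mul_X p i hp =>
    have hC : ∀ r : ℂ, algebraMap ℂ (Polynomial ℂ) r = Polynomial.C r := fun _ => rfl
    simp only [map_mul, Polynomial.derivative_mul, hp, map_add, Derivation.leibniz, smul_eq_mul,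
      aeval_X, aeval_C, hC]
    fin_cases i
    · simp
      ring
    · simp
      ring

theorem hardy_uni {h : Polynomial ℂ} (hh : h ≠ 0) (h0 : h.eval 0 = 0)
    (hr : ∀ t, h.derivative.eval t = 0 → h.eval t = 0) :
    h = Polynomial.C h.leadingCoeff * Polynomial.X ^ h.natDegree := by
  classical
  have hroots : h.derivative.roots = h.roots - h.roots.dedup := by
    ext t
    rw [Multiset.count_sub, Polynomial.count_roots, Polynomial.count_roots, Multiset.count_dedup]
    by_cases ht : h.IsRoot t
    · rw [Polynomial.derivative_rootMultiplicity_of_root ht,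
        if_pos ((Polynomial.mem_roots hh).2 ht)]
    · rw [Polynomial.rootMultiplicity_eq_zero (fun h' => ht (hr t h')),
        Polynomial.rootMultiplicity_eq_zero ht, Nat.zero_sub]
  have hc := congrArg Multiset.card hroots
  have h0m : (0 : ℂ) ∈ h.roots := (Polynomial.mem_roots hh).2 h0
  rw [Multiset.card_sub (Multiset.dedup_le _), IsAlgClosed.card_roots_eq_natDegree,
    IsAlgClosed.card_roots_eq_natDegree, Polynomial.natDegree_derivative] at hc
  have h1 : 1 ≤ h.natDegree := by
    rw [← IsAlgClosed.card_roots_eq_natDegree]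
    exact Multiset.card_pos_iff_exists_mem.2 ⟨0, h0m⟩
  have h2 : h.roots.dedup.card ≤ h.natDegree := by
    rw [← IsAlgClosed.card_roots_eq_natDegree]
    exact Multiset.card_le_card (Multiset.dedup_le _)
  have h3 : h.roots.dedup.card = 1 := by omega
  obtain ⟨z, hz⟩ := Multiset.card_eq_one.1 h3
  have hz0 : ∀ t ∈ h.roots, t = 0 := by
    intro t ht
    have e1 := Multiset.mem_dedup.2 ht
    have e2 := Multiset.mem_dedup.2 h0m
    rw [hz, Multiset.mem_singleton] at e1 e2
    rw [e1, e2]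
  have h4 : h.roots = Multiset.replicate h.natDegree 0 := by
    rw [Multiset.eq_replicate]
    exact ⟨IsAlgClosed.card_roots_eq_natDegree, hz0⟩
  have h5 := (IsAlgClosed.splits h).eq_prod_roots
  rw [h4] at h5
  simpa using h5

/-- if the nonzero degree-`n` binary form `f` (n ≥ 2) is not a
rotated Dicke form, then for any linear factor `a·x + b·y` of `f`, the derived
form `g = conj(a)·∂f/∂x + conj(b)·∂f/∂y` has a linear factor `c·x + d·y` which
does not divide `f`; consequently `f(−d,c) ≠ 0`, `g(−d,c) = 0`, `f(−b,a) = 0`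
(the Hardy paradox conditions). -/
theorem hardy_measurements_exist (n : ℕ) (hn : 2 ≤ n)
    (f : MvPolynomial (Fin 2) ℂ) (hf : f ≠ 0) (hhom : f.IsHomogeneous n)
    (hnotdicke : ¬ ∃ (K : ℂ) (p : ℕ) (a₁ b₁ a₂ b₂ : ℂ), K ≠ 0 ∧ p ≤ n ∧
        ¬(a₁ = 0 ∧ b₁ = 0) ∧ ¬(a₂ = 0 ∧ b₂ = 0) ∧
        (starRingEnd ℂ) a₁ * a₂ + (starRingEnd ℂ) b₁ * b₂ = 0 ∧
        f = C K * (C a₁ * X (0 : Fin 2) + C b₁ * X (1 : Fin 2)) ^ p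
              * (C a₂ * X (0 : Fin 2) + C b₂ * X (1 : Fin 2)) ^ (n - p)) :
    ∀ a b : ℂ, ¬(a = 0 ∧ b = 0) →
      (C a * X (0 : Fin 2) + C b * X (1 : Fin 2)) ∣ f →
      ∀ g : MvPolynomial (Fin 2) ℂ,
        g = C ((starRingEnd ℂ) a) * pderiv (0 : Fin 2) f
          + C ((starRingEnd ℂ) b) * pderiv (1 : Fin 2) f →
        ∃ c d : ℂ, ¬(c = 0 ∧ d = 0) ∧
          (C c * X (0 : Fin 2) + C d * X (1 : Fin 2)) ∣ g ∧
          ¬ ((C c * X (0 : Fin 2) + C d * X (1 : Fin 2)) ∣ f) ∧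
          eval ![-d, c] f ≠ 0 ∧ eval ![-d, c] g = 0 ∧ eval ![-b, a] f = 0 := by
  intro a b hab hdvd g hg
  set a' := (starRingEnd ℂ) a with ha'
  set b' := (starRingEnd ℂ) b with hb'
  have hN : a' * a + b' * b ≠ 0 := by
    intro h
    rw [ha', hb', ← Complex.normSq_eq_conj_mul_self, ← Complex.normSq_eq_conj_mul_self] at h
    have h' : Complex.normSq a + Complex.normSq b = 0 := by exact_mod_cast h
    have h1 := Complex.normSq_nonneg a
    have h2 := Complex.normSq_nonneg b
    exact hab ⟨Complex.normSq_eq_zero.1 (by linarith), Complex.normSq_eq_zero.1 (by linarith)⟩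
  have hroot : eval ![-b, a] f = 0 := by
    obtain ⟨q, rfl⟩ := hdvd
    simp
    left; ring
  let w : Fin 2 → Polynomial ℂ := ![Polynomial.C a' * Polynomial.X + Polynomial.C (-b),
      Polynomial.C b' * Polynomial.X + Polynomial.C a]
  have hev : ∀ (p : MvPolynomial (Fin 2) ℂ) (t : ℂ),
      (aeval w p).eval t = eval ![a' * t - b, b' * t + a] p := by
    intro p t
    rw [← Polynomial.coe_aeval_eq_eval, MvPolynomial.comp_aeval_apply,
      ← MvPolynomial.aeval_eq_eval]
    show aeval _ p = aeval _ p
    congr 2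
    funext i
    fin_cases i
    · simp [w]; ring
    · simp [w]
  set h : Polynomial ℂ := aeval w f with hh
  have hder : h.derivative = aeval w g := by
    rw [hg]; exact hardy_chain f a' (-b) b' a
  have hrec : ∀ x : Fin 2 → ℂ, -b' * x 0 + a' * x 1 ≠ 0 →
      (a' * a + b' * b) ^ n * eval x f = (-b' * x 0 + a' * x 1) ^ n *
        h.eval ((a * x 0 + b * x 1) / (-b' * x 0 + a' * x 1)) := by
    intro x hv
    rw [hh, hev]
    have hq := mul_div_cancel_left₀ (a * x 0 + b * x 1) hv
    rw [mul_div_assoc] at hq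
    have e1 := hardy_scale hhom (a' * a + b' * b) x
    have e2 := hardy_scale hhom (-b' * x 0 + a' * x 1)
      ![a' * ((a * x 0 + b * x 1) / (-b' * x 0 + a' * x 1)) - b,
        b' * ((a * x 0 + b * x 1) / (-b' * x 0 + a' * x 1)) + a]
    rw [MvPolynomial.aeval_eq_eval] at e1 e2
    refine e1.symm.trans (Eq.trans ?_ e2)
    congr 2
    funext i
    fin_cases i
    · simp only [Fin.zero_eta, Matrix.cons_val_zero]
      linear_combination (-a') * hq
    · simp only [Fin.mk_one, Matrix.cons_val_one, Matrix.cons_val_zero]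
      linear_combination (-b') * hq
  have hvne : (C (-b') * X 0 + C a' * X 1 : MvPolynomial (Fin 2) ℂ) ≠ 0 := by
    intro h
    have := congrArg (eval ![-b, a]) h
    simp at this
    exact hN (by linear_combination this)
  have hdeg : h.natDegree ≤ n := by
    have := MvPolynomial.aeval_natDegree_le (m := n) (n := 1) f hhom.totalDegree_le w ?_
    · simpa using this
    · intro i
      fin_cases i
      · exact Polynomial.natDegree_linear_le
      · exact Polynomial.natDegree_linear_le
  have hfun : ∀ (K : ℂ) (m : ℕ), m ≤ n → h = Polynomial.C K * Polynomial.X ^ m →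
      f = C (K / (a' * a + b' * b) ^ n) * (C a * X 0 + C b * X 1) ^ m
        * (C (-b') * X 0 + C a' * X 1) ^ (n - m) := by
    intro K m hm hK
    apply mul_left_cancel₀ hvne
    apply MvPolynomial.funext
    intro x
    simp only [map_mul, map_add, map_pow, eval_C, eval_X]
    by_cases hv : -b' * x 0 + a' * x 1 = 0
    · rw [hv]; simp
    · congr 1
      have e := hrec x hv
      rw [hK] at e
      simp only [Polynomial.eval_mul, Polynomial.eval_C, Polynomial.eval_pow,
        Polynomial.eval_X] at e
      apply mul_left_cancel₀ (pow_ne_zero n hN)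
      rw [e]
      obtain ⟨k, rfl⟩ := Nat.exists_eq_add_of_le hm
      rw [Nat.add_sub_cancel_left, div_pow, pow_add (-b' * x 0 + a' * x 1)]
      generalize -b' * x 0 + a' * x 1 = v at hv
      generalize a' * a + b' * b = N at hN
      field_simp
  have hh0 : h ≠ 0 := by
    intro h0
    apply hf
    rw [hfun 0 0 (Nat.zero_le _) (by simp [h0])]
    simp
  have hhz : h.eval 0 = 0 := by
    rw [hh, hev]; simpa using hroot
  obtain ⟨t, ht1, ht2⟩ : ∃ t, h.derivative.eval t = 0 ∧ h.eval t ≠ 0 := by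
    by_contra hcon
    push Not at hcon
    have hm := hardy_uni hh0 hhz hcon
    refine hnotdicke ⟨_, h.natDegree, a, b, -b', a', ?_, hdeg, hab, ?_, ?_,
      hfun h.leadingCoeff h.natDegree hdeg hm⟩
    · exact div_ne_zero (Polynomial.leadingCoeff_ne_zero.2 hh0) (pow_ne_zero n hN)
    · rintro ⟨h1, h2⟩
      apply hN
      rw [h2, neg_eq_zero.1 h1]; simp
    · rw [← ha', ← hb']; ring
  rw [hder, hev] at ht1
  rw [hh, hev] at ht2
  have hpt : (![a' * t - b, b' * t + a] : Fin 2 → ℂ) = ![-(b - a' * t), b' * t + a] := by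
    rw [neg_sub]
  rw [hpt] at ht1 ht2
  have hcd : ¬(b' * t + a = 0 ∧ b - a' * t = 0) := by
    rintro ⟨h1, h2⟩
    exact hN (by linear_combination a' * h1 + b' * h2)
  have hghom : g.IsHomogeneous (n - 1) := by
    rw [hg]
    exact (hhom.pderiv.C_mul _).add (hhom.pderiv.C_mul _)
  refine ⟨b' * t + a, b - a' * t, hcd, hardy_dvd hghom hcd ht1, ?_, ht2, ht1, hroot⟩
  rintro ⟨q, hq⟩
  apply ht2
  rw [hq]
  simp
  left; ring
end

section
/- Let n ≥ 2, let δ ≥ 1, and let f ∈ ℂ[x,y] be a nonzero homogeneous polynomial of degree n which is NOT of the form K·(a₁·x + b₁·y)^p·(a₂·x + b₂·y)^{n−p} with K ∈ ℂ nonzero, 0 ≤ p ≤ n, and nonzero (a₁,b₁), (a₂,b₂) ∈ ℂ² satisfying conj(a₁)·a₂ + conj(b₁)·b₂ = 0. Suppose (a·x + b·y)^δ divides f for some nonzero (a,b) ∈ ℂ². Then, setting g := conj(a)·∂f/∂x + conj(b)·∂f/∂y and D := (−b)·∂/∂x + a·∂/∂y, there exists a nonzero (c,d) ∈ ℂ²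 such that: (i) f(−d,c) ≠ 0; (ii) g(−d,c) = 0; (iii) f(−b,a) = 0; and (iv) D^k f = 0 for every integer k with n − δ < k ≤ n. -/
open MvPolynomial

/-- A univariate complex polynomial vanishing at `0`, all of whose critical points are roots,
is a monomial. -/
lemma eh_univ (P : Polynomial ℂ) (hP : P ≠ 0) (h0 : P.eval 0 = 0)
    (h : ∀ t, P.derivative.eval t = 0 → P.eval t = 0) :
    P = Polynomial.C P.leadingCoeff * Polynomial.X ^ P.natDegree := by
  classical
  have h0m : (0 : ℂ) ∈ P.roots := (Polynomial.mem_roots hP).2 h0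
  have hcard : P.roots.card = P.natDegree := IsAlgClosed.card_roots_eq_natDegree
  have hpos : 0 < P.natDegree := by
    rw [← hcard]; exact Multiset.card_pos_iff_exists_mem.2 ⟨0, h0m⟩
  have hd0 : P.derivative ≠ 0 := by
    intro hd
    have := Polynomial.natDegree_eq_zero_of_derivative_eq_zero hd
    omega
  have hlt := Polynomial.natDegree_derivative_lt hpos.ne'
  have hcard' : P.derivative.roots.card = P.derivative.natDegree :=
    IsAlgClosed.card_roots_eq_natDegree
  have hdeg : P.derivative.natDegree = P.natDegree - 1 := by
    have := Polynomial.degree_derivative_eq P hpos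
    exact Polynomial.natDegree_eq_of_degree_eq_some this
  have hsum : P.roots = P.derivative.roots + P.roots.dedup := by
    ext r
    rw [Multiset.count_add, Polynomial.count_roots, Polynomial.count_roots]
    by_cases hr : P.IsRoot r
    · have h1 : Multiset.count r P.roots.dedup = 1 :=
        Multiset.count_eq_one_of_mem (Multiset.nodup_dedup _)
          (Multiset.mem_dedup.2 ((Polynomial.mem_roots hP).2 hr))
      have h2 := Polynomial.derivative_rootMultiplicity_of_root hr
      have h3 := (Polynomial.rootMultiplicity_pos hP).2 hr
      omega
    · have h1 : Multiset.count r P.roots.dedup = 0 :=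
        Multiset.count_eq_zero.2 fun hm => hr ((Polynomial.mem_roots hP).1 (Multiset.mem_dedup.1 hm))
      rw [h1, Polynomial.rootMultiplicity_eq_zero hr,
        Polynomial.rootMultiplicity_eq_zero fun hr' => hr (h r hr')]
  have hc1 : P.roots.dedup.card = 1 := by
    have := congrArg Multiset.card hsum
    rw [Multiset.card_add] at this
    omega
  obtain ⟨z, hz⟩ := Multiset.card_eq_one.1 hc1
  have hall : ∀ r ∈ P.roots, r = 0 := by
    intro r hr
    have h1 := Multiset.mem_dedup.2 hr
    have h2 := Multiset.mem_dedup.2 h0m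
    rw [hz, Multiset.mem_singleton] at h1 h2
    rw [h1, h2]
  have hrep : P.roots = Multiset.replicate P.natDegree 0 := Multiset.eq_replicate.2 ⟨hcard, hall⟩
  have := (IsAlgClosed.splits P).eq_prod_roots
  rw [hrep] at this
  simpa using this

/-- The chain rule along a polynomial curve. -/
lemma eh_chain (v : Fin 2 → Polynomial ℂ) (p : MvPolynomial (Fin 2) ℂ) :
    Polynomial.derivative (aeval v p) =
      aeval v (pderiv 0 p) * Polynomial.derivative (v 0)
        + aeval v (pderiv 1 p) * Polynomial.derivative (v 1) := by
  induction p using MvPolynomial.induction_on with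
  | C r => simp
  | add p q hp hq => simp only [map_add, hp, hq]; ring
  | mul_X p i hp =>
    fin_cases i
    · simp [pderiv_mul, hp, pderiv_X]; ring
    · simp [pderiv_mul, hp, pderiv_X]; ring

lemma eh_scale (n : ℕ) (f : MvPolynomial (Fin 2) ℂ) (hhom : f.IsHomogeneous n) (s x y : ℂ) :
    eval ![s * x, s * y] f = s ^ n * eval ![x, y] f := by
  rw [eval_eq', eval_eq', Finset.mul_sum]
  refine Finset.sum_congr rfl fun d hd => ?_
  have := hhom.degree_eq_sum_deg_support hd
  have h2 : d 0 + d 1 = n := by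
    rw [this, ← Finsupp.degree_apply, Finsupp.degree_eq_sum]; simp
  simp only [Fin.prod_univ_two, Matrix.cons_val_zero, Matrix.cons_val_one, mul_pow, ← h2, pow_add]
  ring

lemma eh_iter_zero (a b : ℂ) (k : ℕ) (p : MvPolynomial (Fin 2) ℂ)
    (hp : ∀ m : Fin 2 →₀ ℕ, k ≤ m.degree → coeff m p = 0) :
    (fun p : MvPolynomial (Fin 2) ℂ =>
      C (-b) * pderiv (0 : Fin 2) p + C a * pderiv (1 : Fin 2) p)^[k] p = 0 := by
  induction k generalizing p with
  | zero => ext m; simpa using hp m (Nat.zero_le _)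
  | succ k ih =>
    rw [Function.iterate_succ_apply]
    apply ih
    intro m hm
    have h (i : Fin 2) : coeff (m + Finsupp.single i 1) p = 0 := by
      apply hp
      simpa using hm
    simp [coeff_pderiv, h]

lemma eh_iter_mul (a b : ℂ) (k δ : ℕ) (p : MvPolynomial (Fin 2) ℂ) :
    (fun p : MvPolynomial (Fin 2) ℂ =>
      C (-b) * pderiv (0 : Fin 2) p + C a * pderiv (1 : Fin 2) p)^[k]
        ((C a * X (0 : Fin 2) + C b * X (1 : Fin 2)) ^ δ * p)
    = (C a * X (0 : Fin 2) + C b * X (1 : Fin 2)) ^ δ *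
      (fun p : MvPolynomial (Fin 2) ℂ =>
      C (-b) * pderiv (0 : Fin 2) p + C a * pderiv (1 : Fin 2) p)^[k] p := by
  induction k generalizing p with
  | zero => simp
  | succ k ih =>
    rw [Function.iterate_succ_apply, Function.iterate_succ_apply, ← ih]
    congr 1
    simp [pderiv_mul, pderiv_pow, pderiv_X]
    ring

lemma eh_lin_ne (a b : ℂ) (hab : ¬(a = 0 ∧ b = 0)) :
    (C a * X (0 : Fin 2) + C b * X (1 : Fin 2) : MvPolynomial (Fin 2) ℂ) ≠ 0 := by
  intro h
  apply hab
  constructor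
  · simpa using congrArg (eval ![1, 0]) h
  · simpa using congrArg (eval ![0, 1]) h

/-- every non-Dicke degree-`n` binary form `f` with a linear factor
`(a·x + b·y)^δ` admits measurement directions realizing the extended Hardy
conditions: there is a nonzero `(c,d)` with (i) `f(−d,c) ≠ 0`, (ii) `g(−d,c) = 0`
where `g = conj(a)·∂f/∂x + conj(b)·∂f/∂y`, (iii) `f(−b,a) = 0`, and
(iv) `D^k f = 0` for all `n − δ < k ≤ n`, where `D = (−b)·∂/∂x + a·∂/∂y`. -/
theorem extended_hardy_measurements_exist (n δ : ℕ) (hn : 2 ≤ n) (hδ : 1 ≤ δ)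
    (f : MvPolynomial (Fin 2) ℂ) (hf : f ≠ 0) (hhom : f.IsHomogeneous n)
    (hnotdicke : ¬ ∃ (K : ℂ) (p : ℕ) (a₁ b₁ a₂ b₂ : ℂ), K ≠ 0 ∧ p ≤ n ∧
        ¬(a₁ = 0 ∧ b₁ = 0) ∧ ¬(a₂ = 0 ∧ b₂ = 0) ∧
        (starRingEnd ℂ) a₁ * a₂ + (starRingEnd ℂ) b₁ * b₂ = 0 ∧
        f = C K * (C a₁ * X (0 : Fin 2) + C b₁ * X (1 : Fin 2)) ^ p
              * (C a₂ * X (0 : Fin 2) + C b₂ * X (1 : Fin 2)) ^ (n - p))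
    (a b : ℂ) (hab : ¬(a = 0 ∧ b = 0))
    (hdvd : (C a * X (0 : Fin 2) + C b * X (1 : Fin 2)) ^ δ ∣ f)
    (g : MvPolynomial (Fin 2) ℂ)
    (hg : g = C ((starRingEnd ℂ) a) * pderiv (0 : Fin 2) f
            + C ((starRingEnd ℂ) b) * pderiv (1 : Fin 2) f) :
    ∃ c d : ℂ, ¬(c = 0 ∧ d = 0) ∧
      eval ![-d, c] f ≠ 0 ∧
      eval ![-d, c] g = 0 ∧
      eval ![-b, a] f = 0 ∧
      ∀ k : ℕ, n - δ < k → k ≤ n →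
        (fun p : MvPolynomial (Fin 2) ℂ =>
          C (-b) * pderiv (0 : Fin 2) p + C a * pderiv (1 : Fin 2) p)^[k] f = 0 := by
  have hiii : eval ![-b, a] f = 0 := by
    obtain ⟨h, rfl⟩ := hdvd
    have : a * -b + b * a = 0 := by ring
    simp only [map_mul, map_pow, map_add, eval_C, eval_X, Matrix.cons_val_zero,
      Matrix.cons_val_one, this, zero_pow (Nat.one_le_iff_ne_zero.1 hδ), zero_mul]
  have hiv : ∀ k : ℕ, n - δ < k → k ≤ n →
        (fun p : MvPolynomial (Fin 2) ℂ =>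
          C (-b) * pderiv (0 : Fin 2) p + C a * pderiv (1 : Fin 2) p)^[k] f = 0 := by
    intro k hk _
    obtain ⟨h, rfl⟩ := hdvd
    rw [eh_iter_mul, eh_iter_zero, mul_zero]
    intro m hm
    have hL0 := eh_lin_ne a b hab
    have hh0 : h ≠ 0 := right_ne_zero_of_mul hf
    have hL : (C a * X (0 : Fin 2) + C b * X (1 : Fin 2) : MvPolynomial (Fin 2) ℂ).IsHomogeneous 1 :=
      (isHomogeneous_C_mul_X a 0).add (isHomogeneous_C_mul_X b 1)
    have h1 := hhom.totalDegree hf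
    rw [totalDegree_mul_of_isDomain (pow_ne_zero _ hL0) hh0,
      (hL.pow δ).totalDegree (pow_ne_zero _ hL0)] at h1
    apply coeff_eq_zero_of_totalDegree_lt
    rw [← Finsupp.degree_apply]
    omega
  suffices hmain : ∃ c d : ℂ, ¬(c = 0 ∧ d = 0) ∧ eval ![-d, c] f ≠ 0 ∧ eval ![-d, c] g = 0 by
    obtain ⟨c, d, h1, h2, h3⟩ := hmain
    exact ⟨c, d, h1, h2, h3, hiii, hiv⟩
  by_contra hcon
  push Not at hcon
  set a' := (starRingEnd ℂ) a with ha'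
  set b' := (starRingEnd ℂ) b with hb'
  have hN : a * a' + b * b' ≠ 0 := by
    rw [ha', hb', Complex.mul_conj, Complex.mul_conj]
    intro h
    have h : Complex.normSq a + Complex.normSq b = 0 := by exact_mod_cast h
    have h1 := Complex.normSq_nonneg a
    have h2 := Complex.normSq_nonneg b
    exact hab ⟨Complex.normSq_eq_zero.1 (by linarith), Complex.normSq_eq_zero.1 (by linarith)⟩
  have hn0 : n ≠ 0 := by omega
  obtain ⟨v, hv0, hv1⟩ : ∃ v : Fin 2 → Polynomial ℂ,
      v 0 = Polynomial.C a' * Polynomial.X + Polynomial.C (-b) ∧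
      v 1 = Polynomial.C b' * Polynomial.X + Polynomial.C a :=
    ⟨![_, _], rfl, rfl⟩
  set P : Polynomial ℂ := aeval v f with hPdef
  have hev : ∀ (t : ℂ) (p : MvPolynomial (Fin 2) ℂ),
      (aeval v p).eval t = eval ![a' * t - b, b' * t + a] p := by
    intro t p
    induction p using MvPolynomial.induction_on with
    | C r => simp
    | add p q hp hq => simp [hp, hq]
    | mul_X p i hp =>
      fin_cases i
      · simp [hp, hv0]; left; ring
      · simp [hp, hv1]
  have hder : ∀ t, P.derivative.eval t = eval ![a' * t - b, b' * t + a] g := by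
    intro t
    rw [hPdef, eh_chain, hg]
    simp [hv0, hv1, hev]
    ring
  have hroot : ∀ t, P.derivative.eval t = 0 → P.eval t = 0 := by
    intro t ht
    by_contra hne
    rw [hder] at ht
    rw [hPdef, hev] at hne
    have := hcon (b' * t + a) (-(a' * t - b))
    rw [neg_neg] at this
    refine this ?_ hne ht
    intro h1 h2
    apply hN
    rw [neg_eq_zero] at h2
    linear_combination a' * h1 - b' * h2
  have hP0 : P.eval 0 = 0 := by
    rw [hPdef, hev]; simpa using hiii
  have hdeg : P.natDegree ≤ n := by
    have := aeval_natDegree_le f hhom.totalDegree_le v (n := 1) (by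
      intro i
      fin_cases i
      · exact hv0 ▸ Polynomial.natDegree_linear_le
      · exact hv1 ▸ Polynomial.natDegree_linear_le)
    simpa using this
  -- the value of `f` away from the line `v = 0`
  have hval : ∀ x y : ℂ, -b' * x + a' * y ≠ 0 →
      (a * a' + b * b') ^ n * eval ![x, y] f
        = (-b' * x + a' * y) ^ n * P.eval ((a * x + b * y) / (-b' * x + a' * y)) := by
    intro x y hw
    rw [hPdef, hev, ← eh_scale n f hhom, ← eh_scale n f hhom]
    have ht : (a * x + b * y) = (-b' * x + a' * y) * ((a * x + b * y) / (-b' * x + a' * y)) := by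
      rw [mul_div_cancel₀ _ hw]
    generalize (a * x + b * y) / (-b' * x + a' * y) = t at ht
    have e1 : (a * a' + b * b') * x = (-b' * x + a' * y) * (a' * t - b) := by
      linear_combination a' * ht
    have e2 : (a * a' + b * b') * y = (-b' * x + a' * y) * (b' * t + a) := by
      linear_combination b' * ht
    rw [e1, e2]
  have hw0 : (C (-b') * X (0 : Fin 2) + C a' * X (1 : Fin 2) : MvPolynomial (Fin 2) ℂ) ≠ 0 := by
    apply eh_lin_ne
    rintro ⟨h1, h2⟩
    rw [neg_eq_zero] at h1
    apply hN
    rw [h1, h2]; ring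
  have hP : P ≠ 0 := by
    intro hP
    apply hf
    have : (C (-b') * X (0 : Fin 2) + C a' * X (1 : Fin 2)) * f = 0 := by
      apply MvPolynomial.funext
      intro x
      have hx : x = ![x 0, x 1] := by ext i; fin_cases i <;> rfl
      rw [hx]
      by_cases hw : -b' * x 0 + a' * x 1 = 0
      · simp only [map_mul, map_add, eval_C, eval_X, Matrix.cons_val_zero, Matrix.cons_val_one, hw,
          zero_mul, map_zero]
      · have := hval _ _ hw
        rw [hP, Polynomial.eval_zero, mul_zero] at this
        have := (mul_eq_zero.1 this).resolve_left (pow_ne_zero _ hN)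
        rw [map_mul, this, mul_zero, map_zero]
    exact (mul_eq_zero.1 this).resolve_left hw0
  have hmono := eh_univ P hP hP0 hroot
  set m := P.natDegree with hm
  set K := P.leadingCoeff with hK
  have hK0 : K ≠ 0 := Polynomial.leadingCoeff_ne_zero.2 hP
  apply hnotdicke
  refine ⟨K / (a * a' + b * b') ^ n, m, a, b, -b', a', div_ne_zero hK0 (pow_ne_zero _ hN), hdeg,
    hab, ?_, ?_, ?_⟩
  · rintro ⟨h1, h2⟩
    rw [neg_eq_zero] at h1
    apply hN
    rw [h1, h2]; ring
  · ring
  · apply mul_left_cancel₀ hw0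
    apply MvPolynomial.funext
    intro x
    have hx : x = ![x 0, x 1] := by ext i; fin_cases i <;> rfl
    rw [hx]
    by_cases hw : -b' * x 0 + a' * x 1 = 0
    · simp only [map_mul, map_add, eval_C, eval_X, Matrix.cons_val_zero, Matrix.cons_val_one, hw,
        zero_mul]
    · have h1 := hval _ _ hw
      rw [hmono] at h1
      simp only [Polynomial.eval_mul, Polynomial.eval_C, Polynomial.eval_pow,
        Polynomial.eval_X] at h1
      simp only [map_mul, map_add, map_pow, eval_C, eval_X, Matrix.cons_val_zero,
        Matrix.cons_val_one]
      congr 1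
      have h2 : (-b' * x 0 + a' * x 1) ^ n
          = (-b' * x 0 + a' * x 1) ^ m * (-b' * x 0 + a' * x 1) ^ (n - m) := by
        rw [← pow_add]; congr 1; omega
      rw [h2, div_pow] at h1
      have hwm := pow_ne_zero m hw
      apply mul_left_cancel₀ (pow_ne_zero n hN)
      rw [h1]
      have hNn := pow_ne_zero n hN
      generalize (-b' * x 0 + a' * x 1) ^ m = W at *
      generalize (a * a' + b * b') ^ n = NN at *
      field_simp
end
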